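/- Let a ∈ L^∞(0,1) and let R : (0,1) × ℝ → ℂ be measurable such that for almost every y ∈ ℝ the function R(·,y) lies in the Sobolev space W¹₂(0,1) (i.e. R(·,y) ∈ L²(0,1) has a weak derivative ∂ₓR(·,y) ∈ L²(0,1)), and M² := ∫_ℝ (‖R(·,y)‖²_{L²(0,1)} + ‖∂ₓR(·,y)‖²_{L²(0,1)}) dy < ∞. Let ℜ : L²(ℝ;ℂ) → L²((0,1);ℂ) be a bounded operator with (ℜf)(x) = a(x)·∫_ℝ R(x,y) f(y) dy for every f and almost every x. Then ℜ is compact and there is a constant C (independent of R, a) such that 𝒩(t, ℜ) ≤ C·(M·‖a‖_{L^∞})^{2/3}·t^{2/3} for all t > 0. -/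

import Mathlib

open MeasureTheory Set Filter
open scoped ENNReal NNReal Real

noncomputable section

/-- Approximation numbers (singular values) of a continuous linear map between
complex normed spaces: `s_k(A) = inf {‖A - F‖ : rank F ≤ k}`. -/
def sVal {E F : Type*} [NormedAddCommGroup E] [NormedAddCommGroup F]
    [NormedSpace ℂ E] [NormedSpace ℂ F] (A : E →L[ℂ] F) (k : ℕ) : ℝ :=
  sInf {c : ℝ | ∃ G : E →L[ℂ] F, LinearMap.rank (G : E →ₗ[ℂ] F) ≤ (k : Cardinal) ∧ c = ‖A - G‖}

/-- Counting function of singular values: `𝒩(t, A) = #{k : s_k(A) > 1/t}`. -/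
def sCount {E F : Type*} [NormedAddCommGroup E] [NormedAddCommGroup F]
    [NormedSpace ℂ E] [NormedSpace ℂ F] (A : E →L[ℂ] F) (t : ℝ) : ℕ :=
  Set.ncard {k : ℕ | 1 / t < sVal A k}

/-!
Write the operator as `(T f)(x) = a(x) ⟪v(x), f⟫` with `v(x) = conj R(x, ·) ∈ L²`. By
Newton–Leibniz and Cauchy–Schwarz, on an interval of length `δ` the vectors `v(x)` lie within mean
square distance `δ² ∫∫ |R'|²` of a suitable sample `v(x₀)`. Cutting `(p, q)` into `n` equal cells
and projecting off the span of the `n` samples is a perturbation of rank at most `n`, after which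
the Hilbert–Schmidt norm is at most `(q - p) M ‖a‖ / n`. Since the singular value `s_n` of an
operator of Hilbert–Schmidt norm `h` is at most `h / √(n + 1)`, this gives `s_{2n} = O(n^{-3/2})`,
hence a counting function of order `t^{2/3}`.
-/

section ApproximationNumbers

variable {E F : Type*} [NormedAddCommGroup E] [NormedSpace ℂ E]
  [NormedAddCommGroup F] [NormedSpace ℂ F]

lemma sVal_le_norm_sub (T : E →L[ℂ] F) {G : E →L[ℂ] F} {k : ℕ}
    (hG : LinearMap.rank (G : E →ₗ[ℂ] F) ≤ k) : sVal T k ≤ ‖T - G‖ :=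
  csInf_le ⟨0, by rintro _ ⟨_, -, rfl⟩; exact norm_nonneg _⟩ ⟨G, hG, rfl⟩

lemma sVal_zero_le_norm (T : E →L[ℂ] F) : sVal T 0 ≤ ‖T‖ := by
  simpa using sVal_le_norm_sub T (G := 0) (k := 0) (by simp [LinearMap.rank_zero])

lemma exists_norm_sub_lt_of_sVal_lt {T : E →L[ℂ] F} {k : ℕ} {ε : ℝ} (h : sVal T k < ε) :
    ∃ G : E →L[ℂ] F, LinearMap.rank (G : E →ₗ[ℂ] F) ≤ k ∧ ‖T - G‖ < ε := by
  have hne : {c : ℝ | ∃ G : E →L[ℂ] F,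
      LinearMap.rank (G : E →ₗ[ℂ] F) ≤ k ∧ c = ‖T - G‖}.Nonempty :=
    ⟨_, 0, by simp [LinearMap.rank_zero], rfl⟩
  obtain ⟨_, ⟨G, hG, rfl⟩, hlt⟩ := exists_lt_of_csInf_lt hne h
  exact ⟨G, hG, hlt⟩

lemma sVal_add_le_of_rank_le {A : E →L[ℂ] F} {m : ℕ}
    (hA : LinearMap.rank (A : E →ₗ[ℂ] F) ≤ m) (B : E →L[ℂ] F) (n : ℕ) :
    sVal (A + B) (m + n) ≤ sVal B n := by
  refine le_of_forall_gt fun ε hε => ?_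
  obtain ⟨G, hG, hlt⟩ := exists_norm_sub_lt_of_sVal_lt hε
  have hrank : LinearMap.rank ((A + G : E →L[ℂ] F) : E →ₗ[ℂ] F) ≤ (m + n : ℕ) := by
    rw [Nat.cast_add]
    exact (LinearMap.rank_add_le _ _).trans (add_le_add hA hG)
  calc sVal (A + B) (m + n) ≤ ‖A + B - (A + G)‖ := sVal_le_norm_sub _ hrank
    _ = ‖B - G‖ := by rw [add_sub_add_left_eq_sub]
    _ < ε := hlt

lemma sVal_antitone (T : E →L[ℂ] F) : Antitone (sVal T) := fun k l hkl => by
  refine le_of_forall_gt fun ε hε => ?_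
  obtain ⟨G, hG, hlt⟩ := exists_norm_sub_lt_of_sVal_lt hε
  exact (sVal_le_norm_sub T (hG.trans (mod_cast hkl))).trans_lt hlt

lemma isCompactOperator_of_rank_lt_aleph0 {G : E →L[ℂ] F}
    (hG : LinearMap.rank (G : E →ₗ[ℂ] F) < Cardinal.aleph0) : IsCompactOperator G := by
  let S := LinearMap.range (G : E →ₗ[ℂ] F)
  have : FiniteDimensional ℂ S := Module.rank_lt_aleph0_iff.1 hG
  have : ProperSpace S := FiniteDimensional.proper ℂ S
  let G' : E →L[ℂ] S := G.codRestrict S fun x => ⟨x, rfl⟩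
  exact (isCompactOperator_of_locallyCompactSpace_dom G').clm_comp S.subtypeL

lemma isCompactOperator_of_forall_exists_sVal_lt [CompleteSpace F] {T : E →L[ℂ] F}
    (h : ∀ ε > 0, ∃ n, sVal T n < ε) : IsCompactOperator T := by
  refine isClosed_setOfPred_isCompactOperator.closure_subset (Metric.mem_closure_iff.2 ?_)
  intro ε hε
  obtain ⟨n, hn⟩ := h ε hε
  obtain ⟨G, hG, hlt⟩ := exists_norm_sub_lt_of_sVal_lt hn
  exact ⟨G, isCompactOperator_of_rank_lt_aleph0 (hG.trans_lt (Cardinal.natCast_lt_aleph0)),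
    by rwa [dist_eq_norm]⟩

lemma sCount_le_of_sVal_le {T : E →L[ℂ] F} {t : ℝ} {n : ℕ} (h : sVal T n ≤ 1 / t) :
    sCount T t ≤ n := by
  have hsub : {k : ℕ | 1 / t < sVal T k} ⊆ Set.Iio n := fun k hk =>
    lt_of_not_ge fun hnk => (hk.trans_le (sVal_antitone T hnk)).not_ge h
  simpa [sCount] using Set.ncard_le_ncard hsub (Set.finite_Iio n)

variable {T : E →L[ℂ] F} {D s : ℝ} {m : ℕ}

lemma isCompactOperator_of_sVal_mul_le [CompleteSpace F] (hs : 0 < s)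
    (h : ∀ n : ℕ, n ≠ 0 → sVal T (m * n) ≤ D * (n : ℝ) ^ (-s)) : IsCompactOperator T := by
  refine isCompactOperator_of_forall_exists_sVal_lt fun ε hε => ?_
  have hlim : Tendsto (fun n : ℕ => D * (n : ℝ) ^ (-s)) atTop (nhds 0) := by
    simpa using ((tendsto_rpow_neg_atTop hs).comp tendsto_natCast_atTop_atTop).const_mul D
  obtain ⟨n, hn, hn0⟩ := ((hlim.eventually_lt_const hε).and (eventually_ne_atTop 0)).exists
  exact ⟨m * n, (h n hn0).trans_lt hn⟩

lemma sCount_le_of_sVal_mul_le (hD : 0 ≤ D) (hs : 0 < s) (h₀ : sVal T 0 ≤ D)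
    (h : ∀ n : ℕ, n ≠ 0 → sVal T (m * n) ≤ D * (n : ℝ) ^ (-s)) {t : ℝ} (ht : 0 < t) :
    (sCount T t : ℝ) ≤ 2 * m * (D * t) ^ s⁻¹ := by
  rcases le_total (D * t) 1 with hDt | hDt
  · have hle : sVal T 0 ≤ 1 / t := h₀.trans ((le_div_iff₀ ht).2 hDt)
    rw [Nat.le_zero.1 (sCount_le_of_sVal_le hle), Nat.cast_zero]
    positivity
  set ξ := (D * t) ^ s⁻¹ with hξ
  have hξ₁ : 1 ≤ ξ := Real.one_le_rpow hDt (inv_nonneg.2 hs.le)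
  set n := ⌈ξ⌉₊
  have hξn : ξ ≤ n := Nat.le_ceil ξ
  have hDtn : D * t ≤ (n : ℝ) ^ s := by
    calc D * t = ξ ^ s := by rw [hξ, Real.rpow_inv_rpow (by positivity) hs.ne']
      _ ≤ (n : ℝ) ^ s := Real.rpow_le_rpow (by positivity) hξn hs.le
  have hn : 0 < (n : ℝ) := by linarith
  have hle : sVal T (m * n) ≤ 1 / t := by
    refine (h n (Nat.cast_pos.1 hn).ne').trans ?_
    rw [Real.rpow_neg hn.le, ← div_eq_mul_inv, div_le_div_iff₀ (by positivity) ht, one_mul]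
    exact hDtn
  calc (sCount T t : ℝ) ≤ m * n := mod_cast sCount_le_of_sVal_le hle
    _ ≤ m * (2 * ξ) := by
      have := Nat.ceil_lt_add_one (zero_le_one.trans hξ₁)
      gcongr
      linarith
    _ = 2 * m * ξ := by ring

end ApproximationNumbers

section HilbertSpace

instance finiteDimensional_span_range {K V ι : Type*} [DivisionRing K] [AddCommGroup V]
    [Module K V] [Finite ι] (e : ι → V) : FiniteDimensional K (Submodule.span K (range e)) :=
  FiniteDimensional.span_of_finite K (finite_range e)

variable {E F : Type*} [NormedAddCommGroup E] [InnerProductSpace ℂ E]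
  [NormedAddCommGroup F] [NormedSpace ℂ F]

lemma rank_comp_starProjection_span_le (T : E →L[ℂ] F) {n : ℕ} (e : Fin n → E) :
    LinearMap.rank ((T ∘L (Submodule.span ℂ (range e)).starProjection : E →L[ℂ] F) :
      E →ₗ[ℂ] F) ≤ n := by
  have hle : LinearMap.range ((T ∘L (Submodule.span ℂ (range e)).starProjection : E →L[ℂ] F) :
      E →ₗ[ℂ] F) ≤ Submodule.span ℂ (range (T ∘ e)) := by
    rintro _ ⟨x, rfl⟩
    rw [range_comp, ← ContinuousLinearMap.coe_coe, ← Submodule.map_span]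
    exact Submodule.mem_map_of_mem (Submodule.starProjection_apply_mem _ x)
  refine (Submodule.rank_mono hle).trans ?_
  rw [← Module.finrank_eq_rank]
  exact_mod_cast (finrank_range_le_card (T ∘ e)).trans (Fintype.card_fin n).le

lemma sVal_add_le_sVal_comp_starProjection (T : E →L[ℂ] F) {m : ℕ} (e : Fin m → E) (n : ℕ) :
    sVal T (m + n) ≤ sVal (T ∘L (Submodule.span ℂ (range e))ᗮ.starProjection) n := by
  have hT : T ∘L (Submodule.span ℂ (range e)).starProjection +
      T ∘L (Submodule.span ℂ (range e))ᗮ.starProjection = T := by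
    ext x
    exact (map_add T _ _).symm.trans
      (congrArg T (Submodule.starProjection_add_starProjection_orthogonal x))
  simpa only [hT] using sVal_add_le_of_rank_le (rank_comp_starProjection_span_le T e)
    (T ∘L (Submodule.span ℂ (range e))ᗮ.starProjection) n

lemma exists_mem_orthogonal_lt_norm {T : E →L[ℂ] F} {S : Submodule ℂ E}
    [S.HasOrthogonalProjection] {c : ℝ} (hc : 0 ≤ c) (h : c < ‖T ∘L Sᗮ.starProjection‖) :
    ∃ w ∈ Sᗮ, ‖w‖ = 1 ∧ c < ‖T w‖ := by
  obtain ⟨x, hx₁, hx⟩ := ContinuousLinearMap.exists_lt_apply_of_lt_opNorm _ h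
  set v := Sᗮ.starProjection x
  have hTv : c < ‖T v‖ := hx
  have hv₁ : ‖v‖ ≤ 1 := (Submodule.norm_starProjection_apply_le Sᗮ x).trans hx₁.le
  have hv₀ : v ≠ 0 := fun h₀ => by simp [h₀, hc.not_gt] at hTv
  refine ⟨((‖v‖⁻¹ : ℝ) : ℂ) • v,
    Submodule.smul_mem _ _ (Submodule.starProjection_apply_mem Sᗮ x), ?_, ?_⟩
  · simp [norm_smul, hv₀]
  · calc c < ‖T v‖ := hTv
      _ ≤ ‖v‖⁻¹ * ‖T v‖ :=
        le_mul_of_one_le_left (norm_nonneg _) ((one_le_inv₀ (norm_pos_iff.2 hv₀)).2 hv₁)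
      _ = _ := by simp [norm_smul]

lemma exists_orthonormal_lt_norm_of_lt_sVal {T : E →L[ℂ] F} {n : ℕ} {c : ℝ} (hc : 0 ≤ c)
    (h : c < sVal T n) : ∃ e : Fin (n + 1) → E, Orthonormal ℂ e ∧ ∀ i, c < ‖T (e i)‖ := by
  suffices H : ∀ k ≤ n + 1, ∃ e : Fin k → E, Orthonormal ℂ e ∧ ∀ i, c < ‖T (e i)‖ from
    H _ le_rfl
  intro k
  induction k with
  | zero => exact fun _ => ⟨Fin.elim0, .of_isEmpty _, fun i => i.elim0⟩
  | succ k ih =>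
    intro hk
    obtain ⟨e, he, hTe⟩ := ih (by omega)
    set S := Submodule.span ℂ (range e)
    have hlt : c < ‖T ∘L Sᗮ.starProjection‖ :=
      calc c < sVal T n := h
        _ ≤ sVal T (k + 0) := sVal_antitone T (by omega)
        _ ≤ sVal (T ∘L Sᗮ.starProjection) 0 := sVal_add_le_sVal_comp_starProjection T e 0
        _ ≤ ‖T ∘L Sᗮ.starProjection‖ := sVal_zero_le_norm _
    obtain ⟨w, hwS, hw₁, hTw⟩ := exists_mem_orthogonal_lt_norm hc hlt
    have hwe : ∀ i, inner ℂ w (e i) = 0 := fun i =>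
      (Submodule.mem_orthogonal' S w).1 hwS _ (Submodule.subset_span ⟨i, rfl⟩)
    exact ⟨Matrix.vecCons w e, orthonormal_vecCons_iff.2 ⟨hw₁, hwe, he⟩,
      Fin.cases hTw hTe⟩

lemma sVal_le_div_sqrt {T : E →L[ℂ] F} {n : ℕ} {h : ℝ} (hh : 0 ≤ h)
    (H : ∀ e : Fin (n + 1) → E, Orthonormal ℂ e → ∑ i, ‖T (e i)‖ ^ 2 ≤ h ^ 2) :
    sVal T n ≤ h / √((n : ℝ) + 1) := by
  by_contra! hlt
  have hc : 0 ≤ h / √((n : ℝ) + 1) := by positivity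
  obtain ⟨e, he, hTe⟩ := exists_orthonormal_lt_norm_of_lt_sVal hc hlt
  have hsum : h ^ 2 < ∑ i, ‖T (e i)‖ ^ 2 := by
    calc h ^ 2 = ∑ _i : Fin (n + 1), (h / √((n : ℝ) + 1)) ^ 2 := by
          have : (0 : ℝ) ≤ n + 1 := by positivity
          simp only [Finset.sum_const, Finset.card_univ, Fintype.card_fin, nsmul_eq_mul, div_pow,
            Real.sq_sqrt this, Nat.cast_add, Nat.cast_one]
          field_simp
      _ < ∑ i, ‖T (e i)‖ ^ 2 := by
          refine Finset.sum_lt_sum_of_nonempty Finset.univ_nonempty fun i _ => ?_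
          exact pow_lt_pow_left₀ (hTe i) hc two_ne_zero
  exact (H e he).not_gt hsum

lemma enorm_starProjection_orthogonal_le {S : Submodule ℂ E} [S.HasOrthogonalProjection]
    (v : E) {s : E} (hs : s ∈ S) : ‖Sᗮ.starProjection v‖ₑ ≤ ‖v - s‖ₑ := by
  have hps : Sᗮ.starProjection (v - s) = Sᗮ.starProjection v := by
    rw [map_sub, Submodule.starProjection_orthogonal_apply_eq_zero hs, sub_zero]
  rw [← hps, ← ofReal_norm, ← ofReal_norm]
  exact ENNReal.ofReal_le_ofReal (Submodule.norm_starProjection_apply_le _ _)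

end HilbertSpace

section LpTwo

variable {α F : Type*} [MeasurableSpace α] {μ : Measure α} [NormedAddCommGroup F]

lemma eLpNorm_two_sq (f : α → F) : eLpNorm f 2 μ ^ 2 = ∫⁻ x, ‖f x‖ₑ ^ 2 ∂μ := by
  simpa using eLpNorm_nnreal_pow_eq_lintegral (f := f) (μ := μ) two_ne_zero

lemma Lp_enorm_sq (f : Lp F 2 μ) : ‖f‖ₑ ^ 2 = ∫⁻ x, ‖f x‖ₑ ^ 2 ∂μ := by
  rw [Lp.enorm_def, eLpNorm_two_sq]

lemma Lp_enorm_sq_of_ae_eq_star {v : Lp ℂ 2 μ} {f : α → ℂ} (hv : v =ᵐ[μ] star f) :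
    ‖v‖ₑ ^ 2 = ∫⁻ x, ‖f x‖ₑ ^ 2 ∂μ := by
  rw [Lp_enorm_sq]
  refine lintegral_congr_ae (hv.mono fun x hx => ?_)
  simp only [hx, Pi.star_apply, RCLike.star_def, RCLike.enorm_conj]

lemma memLp_two_of_lintegral_enorm_sq_ne_top {f : α → F} (hf : AEStronglyMeasurable f μ)
    (h : ∫⁻ x, ‖f x‖ₑ ^ 2 ∂μ ≠ ⊤) : MemLp f 2 μ := by
  refine ⟨hf, lt_top_iff_ne_top.2 fun htop => h ?_⟩
  rw [← eLpNorm_two_sq, htop, ENNReal.top_pow two_ne_zero]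

lemma ofReal_integral_norm_sq {f : α → F} (hf : MemLp f 2 μ) :
    ENNReal.ofReal (∫ x, ‖f x‖ ^ 2 ∂μ) = ∫⁻ x, ‖f x‖ₑ ^ 2 ∂μ := by
  rw [ofReal_integral_eq_lintegral_ofReal (hf.integrable_norm_pow two_ne_zero)
    (Eventually.of_forall fun _ => sq_nonneg _)]
  simp only [ENNReal.ofReal_pow (norm_nonneg _), ofReal_norm]

lemma sq_lintegral_enorm_le {f : α → F} (hf : AEStronglyMeasurable f μ) :
    (∫⁻ x, ‖f x‖ₑ ∂μ) ^ 2 ≤ μ univ * ∫⁻ x, ‖f x‖ₑ ^ 2 ∂μ := by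
  have h : eLpNorm f 1 μ ≤ eLpNorm f 2 μ * μ univ ^ (1 / 2 : ℝ) := by
    convert eLpNorm_le_eLpNorm_mul_rpow_measure_univ one_le_two hf using 3
    norm_num
  calc (∫⁻ x, ‖f x‖ₑ ∂μ) ^ 2 = eLpNorm f 1 μ ^ 2 := by rw [eLpNorm_one_eq_lintegral_enorm]
    _ ≤ (eLpNorm f 2 μ * μ univ ^ (1 / 2 : ℝ)) ^ 2 := by gcongr
    _ = μ univ * ∫⁻ x, ‖f x‖ₑ ^ 2 ∂μ := by
      rw [mul_pow, eLpNorm_two_sq, ← ENNReal.rpow_mul_natCast, mul_comm]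
      norm_num

end LpTwo

/-- `T` is a Carleman operator with multiplier `a` and representing vectors `v`:
`(T f)(x) = a(x) ⟪v(x), f⟫` for almost every `x`, the exceptional null set depending on `f`.
An integral operator `(T f)(x) = a(x) ∫ k(x, y) f(y) dy` on `L²` has `v(x) = conj k(x, ·)`. -/
def IsCarlemanOperator {α E : Type*} [MeasurableSpace α] {μ : Measure α}
    [NormedAddCommGroup E] [InnerProductSpace ℂ E]
    (T : E →L[ℂ] Lp ℂ 2 μ) (a : α → ℂ) (v : α → E) : Prop :=
  ∀ f : E, ∀ᵐ x ∂μ, T f x = a x * inner ℂ (v x) f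

namespace IsCarlemanOperator

variable {α E : Type*} [MeasurableSpace α] {μ : Measure α}
  [NormedAddCommGroup E] [InnerProductSpace ℂ E]
  {T : E →L[ℂ] Lp ℂ 2 μ} {a : α → ℂ} {v : α → E}

lemma comp_starProjection (hT : IsCarlemanOperator T a v) (S : Submodule ℂ E)
    [S.HasOrthogonalProjection] :
    IsCarlemanOperator (T ∘L S.starProjection) a fun x => S.starProjection (v x) := fun f => by
  filter_upwards [hT (S.starProjection f)] with x hx
  rw [ContinuousLinearMap.comp_apply, hx, Submodule.inner_starProjection_left_eq_right]

lemma sum_enorm_sq_le (hT : IsCarlemanOperator T a v) (ha : eLpNorm a ⊤ μ ≠ ⊤)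
    {ι : Type*} [Fintype ι] {e : ι → E} (he : Orthonormal ℂ e) :
    ∑ i, ‖T (e i)‖ₑ ^ 2 ≤ eLpNorm a ⊤ μ ^ 2 * ∫⁻ x, ‖v x‖ₑ ^ 2 ∂μ := by
  have bessel : ∀ x, ∑ i, ‖inner ℂ (v x) (e i)‖ₑ ^ 2 ≤ ‖v x‖ₑ ^ 2 := fun x => by
    have h := ENNReal.ofReal_le_ofReal (he.sum_inner_products_le (v x) (s := Finset.univ))
    rw [ENNReal.ofReal_sum_of_nonneg fun _ _ => by positivity] at h
    simpa only [ENNReal.ofReal_pow (norm_nonneg _), ofReal_norm, norm_inner_symm (e _)] using h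
  have hpoint : ∀ᵐ x ∂μ, ∑ i, ‖T (e i) x‖ₑ ^ 2 ≤ eLpNorm a ⊤ μ ^ 2 * ‖v x‖ₑ ^ 2 := by
    filter_upwards [ae_all_iff.2 fun i => hT (e i), enorm_ae_le_eLpNormEssSup a μ] with x hTx hax
    simp only [hTx, enorm_mul, mul_pow, ← Finset.mul_sum, eLpNorm_exponent_top]
    gcongr
    exact bessel x
  calc ∑ i, ‖T (e i)‖ₑ ^ 2 = ∫⁻ x, ∑ i, ‖T (e i) x‖ₑ ^ 2 ∂μ := by
        simp only [Lp_enorm_sq]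
        exact (lintegral_finsetSum' _ fun i _ =>
          (Lp.aestronglyMeasurable (T (e i))).enorm.pow_const 2).symm
    _ ≤ ∫⁻ x, eLpNorm a ⊤ μ ^ 2 * ‖v x‖ₑ ^ 2 ∂μ := lintegral_mono_ae hpoint
    _ = _ := lintegral_const_mul' _ _ (ENNReal.pow_ne_top ha)

lemma sVal_le (hT : IsCarlemanOperator T a v) (ha : eLpNorm a ⊤ μ ≠ ⊤) {h : ℝ} (hh : 0 ≤ h)
    (hv : ∫⁻ x, ‖v x‖ₑ ^ 2 ∂μ ≤ ENNReal.ofReal h ^ 2) (n : ℕ) :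
    sVal T n ≤ h * (eLpNorm a ⊤ μ).toReal / √((n : ℝ) + 1) := by
  refine sVal_le_div_sqrt (by positivity) fun e he => ?_
  rw [← ENNReal.ofReal_le_ofReal_iff (by positivity)]
  calc ENNReal.ofReal (∑ i, ‖T (e i)‖ ^ 2) = ∑ i, ‖T (e i)‖ₑ ^ 2 := by
        rw [ENNReal.ofReal_sum_of_nonneg fun _ _ => by positivity]
        simp only [ENNReal.ofReal_pow (norm_nonneg _), ofReal_norm]
    _ ≤ eLpNorm a ⊤ μ ^ 2 * ∫⁻ x, ‖v x‖ₑ ^ 2 ∂μ := hT.sum_enorm_sq_le ha he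
    _ ≤ eLpNorm a ⊤ μ ^ 2 * ENNReal.ofReal h ^ 2 := by gcongr
    _ = _ := by
      rw [ENNReal.ofReal_pow (by positivity), ENNReal.ofReal_mul hh, ENNReal.ofReal_toReal ha,
        mul_comm, mul_pow]

lemma sVal_add_le (hT : IsCarlemanOperator T a v) (ha : eLpNorm a ⊤ μ ≠ ⊤) {h : ℝ} (hh : 0 ≤ h)
    {m : ℕ} {s : Fin m → E}
    (hv : ∫⁻ x, ‖(Submodule.span ℂ (range s))ᗮ.starProjection (v x)‖ₑ ^ 2 ∂μ ≤
      ENNReal.ofReal h ^ 2) (n : ℕ) :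
    sVal T (m + n) ≤ h * (eLpNorm a ⊤ μ).toReal / √((n : ℝ) + 1) :=
  (sVal_add_le_sVal_comp_starProjection T s n).trans
    ((hT.comp_starProjection _).sVal_le ha hh hv n)

end IsCarlemanOperator

section WeakDerivative

variable {F : Type*} [NormedAddCommGroup F] [NormedSpace ℝ F]

/-- `r'` is an integrable weak derivative of `r` on the interval `s`. Weak differentiability is
encoded by the Newton–Leibniz formula between almost all pairs of points of `s`, so no base
point enters and no representative of `r` is singled out. -/
def HasWeakDerivOn (r r' : ℝ → F) (s : Set ℝ) : Prop :=
  IntegrableOn r' s ∧ ∀ᵐ x ∂volume.restrict s, ∀ᵐ u ∂volume.restrict s,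
    r x - r u = ∫ w in u..x, r' w

namespace HasWeakDerivOn

variable {r r' : ℝ → F} {s : Set ℝ}

lemma of_ae_eq_const_add_integral [hs : s.OrdConnected] {x₀ : ℝ} (hx₀ : x₀ ∈ s)
    (hr' : IntegrableOn r' s) {c : F}
    (h : ∀ᵐ x ∂volume.restrict s, r x = c + ∫ w in x₀..x, r' w) : HasWeakDerivOn r r' s := by
  have hint : ∀ x ∈ s, IntervalIntegrable r' volume x₀ x := fun x hx =>
    intervalIntegrable_iff.2 (hr'.mono_set (hs.uIoc_subset hx₀ hx))
  refine ⟨hr', ?_⟩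
  filter_upwards [h, ae_restrict_mem hs.measurableSet] with x hrx hx
  filter_upwards [h, ae_restrict_mem hs.measurableSet] with u hru hu
  rw [hrx, hru, add_sub_add_left_eq_sub,
    intervalIntegral.integral_interval_sub_left (hint x hx) (hint u hu)]

lemma mono (h : HasWeakDerivOn r r' s) {t : Set ℝ} (hts : t ⊆ s) : HasWeakDerivOn r r' t := by
  refine ⟨h.1.mono_set hts, ?_⟩
  filter_upwards [ae_restrict_of_ae_restrict_of_subset hts h.2] with x hx
  exact ae_restrict_of_ae_restrict_of_subset hts hx

lemma ae_enorm_sub_sq_le [hs : s.OrdConnected] (h : HasWeakDerivOn r r' s) :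
    ∀ᵐ x ∂volume.restrict s, ∀ᵐ u ∂volume.restrict s,
      ‖r x - r u‖ₑ ^ 2 ≤ volume s * ∫⁻ w in s, ‖r' w‖ₑ ^ 2 := by
  filter_upwards [h.2, ae_restrict_mem hs.measurableSet] with x hrx hx
  filter_upwards [hrx, ae_restrict_mem hs.measurableSet] with u hru hu
  have hle : ‖r x - r u‖ₑ ≤ ∫⁻ w in s, ‖r' w‖ₑ := by
    rw [hru, ← ofReal_norm, intervalIntegral.norm_intervalIntegral_eq, ofReal_norm]
    exact (enorm_integral_le_lintegral_enorm _).trans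
      (lintegral_mono_set (hs.uIoc_subset hu hx))
  calc ‖r x - r u‖ₑ ^ 2 ≤ (∫⁻ w in s, ‖r' w‖ₑ) ^ 2 := by gcongr
    _ ≤ volume s * ∫⁻ w in s, ‖r' w‖ₑ ^ 2 := by
      simpa only [Measure.restrict_apply_univ] using sq_lintegral_enorm_le h.1.1

lemma lintegral_lintegral_enorm_sub_sq_le [s.OrdConnected] (h : HasWeakDerivOn r r' s) :
    ∫⁻ x in s, ∫⁻ u in s, ‖r x - r u‖ₑ ^ 2 ≤
      volume s ^ 3 * ∫⁻ w in s, ‖r' w‖ₑ ^ 2 := by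
  calc ∫⁻ x in s, ∫⁻ u in s, ‖r x - r u‖ₑ ^ 2
      ≤ ∫⁻ _x in s, ∫⁻ _u in s, volume s * ∫⁻ w in s, ‖r' w‖ₑ ^ 2 :=
        lintegral_mono_ae (h.ae_enorm_sub_sq_le.mono fun _ hx => lintegral_mono_ae hx)
    _ = volume s ^ 3 * ∫⁻ w in s, ‖r' w‖ₑ ^ 2 := by
        simp only [lintegral_const, Measure.restrict_apply_univ]
        ring

end HasWeakDerivOn

end WeakDerivative

section Kernel

variable {β : Type*} [MeasurableSpace β] {ν : Measure β} [SFinite ν]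
  {R R' : ℝ → β → ℂ} {s : Set ℝ}

lemma lintegral_enorm_kernel_sub_sq_le [s.OrdConnected]
    (hR : Measurable (Function.uncurry R)) (hR' : Measurable (Function.uncurry R'))
    (h : ∀ᵐ y ∂ν, HasWeakDerivOn (R · y) (R' · y) s) :
    ∫⁻ x in s, ∫⁻ u in s, ∫⁻ y, ‖R x y - R u y‖ₑ ^ 2 ∂ν ≤
      volume s ^ 3 * ∫⁻ x in s, ∫⁻ y, ‖R' x y‖ₑ ^ 2 ∂ν := by
  have hswap : ∀ x, ∫⁻ u in s, ∫⁻ y, ‖R x y - R u y‖ₑ ^ 2 ∂ν =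
      ∫⁻ y, (∫⁻ u in s, ‖R x y - R u y‖ₑ ^ 2) ∂ν := fun x =>
    lintegral_lintegral_swap (by fun_prop)
  have hmeas : Measurable fun z : ℝ × β => ∫⁻ u in s, ‖R z.1 z.2 - R u z.2‖ₑ ^ 2 :=
    Measurable.lintegral_prod_right'
      (f := fun z : (ℝ × β) × ℝ => ‖R z.1.1 z.1.2 - R z.2 z.1.2‖ₑ ^ 2) (by fun_prop)
  have hmeas' : Measurable fun y => ∫⁻ x in s, ‖R' x y‖ₑ ^ 2 :=
    Measurable.lintegral_prod_left' (f := fun z : ℝ × β => ‖R' z.1 z.2‖ₑ ^ 2) (by fun_prop)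
  calc ∫⁻ x in s, ∫⁻ u in s, ∫⁻ y, ‖R x y - R u y‖ₑ ^ 2 ∂ν
      = ∫⁻ y, (∫⁻ x in s, ∫⁻ u in s, ‖R x y - R u y‖ₑ ^ 2) ∂ν := by
        simp only [hswap]
        exact lintegral_lintegral_swap hmeas.aemeasurable
    _ ≤ ∫⁻ y, (volume s ^ 3 * ∫⁻ x in s, ‖R' x y‖ₑ ^ 2) ∂ν :=
        lintegral_mono_ae (h.mono fun y hy => hy.lintegral_lintegral_enorm_sub_sq_le)
    _ = volume s ^ 3 * ∫⁻ x in s, ∫⁻ y, ‖R' x y‖ₑ ^ 2 ∂ν := by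
        rw [lintegral_const_mul _ hmeas', lintegral_lintegral_swap (by fun_prop)]

lemma exists_lintegral_enorm_sub_sq_le [s.OrdConnected] (hs : volume s ≠ 0) (hs' : volume s ≠ ⊤)
    (hR : Measurable (Function.uncurry R)) (hR' : Measurable (Function.uncurry R'))
    (h : ∀ᵐ y ∂ν, HasWeakDerivOn (R · y) (R' · y) s) {v : ℝ → Lp ℂ 2 ν}
    (hv : ∀ᵐ x ∂volume.restrict s, v x =ᵐ[ν] star (R x)) :
    ∃ c : Lp ℂ 2 ν, ∫⁻ x in s, ‖v x - c‖ₑ ^ 2 ≤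
      volume s ^ 2 * ∫⁻ x in s, ∫⁻ y, ‖R' x y‖ₑ ^ 2 ∂ν := by
  have : IsFiniteMeasure (volume.restrict s) := isFiniteMeasure_restrict.2 hs'
  have hmeas : Measurable fun x => ∫⁻ u in s, ∫⁻ y, ‖R x y - R u y‖ₑ ^ 2 ∂ν := by
    have hin : Measurable fun z : ℝ × ℝ => ∫⁻ y, ‖R z.1 y - R z.2 y‖ₑ ^ 2 ∂ν :=
      Measurable.lintegral_prod_right'
        (f := fun z : (ℝ × ℝ) × β => ‖R z.1.1 z.2 - R z.1.2 z.2‖ₑ ^ 2) (by fun_prop)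
    exact hin.lintegral_prod_right'
  obtain ⟨x₀, hx₀, hle⟩ := exists_notMem_null_le_laverage (by simpa using hs)
    hmeas.aemeasurable (ae_iff.1 hv)
  refine ⟨v x₀, ?_⟩
  calc ∫⁻ x in s, ‖v x - v x₀‖ₑ ^ 2 = ∫⁻ u in s, ∫⁻ y, ‖R x₀ y - R u y‖ₑ ^ 2 ∂ν := by
        refine lintegral_congr_ae (hv.mono fun x hx => ?_)
        have hsub : v x₀ - v x =ᵐ[ν] star (R x₀ - R x) :=
          (Lp.coeFn_sub _ _).trans (star_sub (R x₀) (R x) ▸ (not_not.1 hx₀).sub hx)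
        dsimp only
        rw [enorm_sub_rev, Lp_enorm_sq_of_ae_eq_star hsub]
        rfl
    _ ≤ (∫⁻ x in s, ∫⁻ u in s, ∫⁻ y, ‖R x y - R u y‖ₑ ^ 2 ∂ν) / volume s := by
        simpa only [setLAverage_eq] using hle
    _ ≤ volume s ^ 2 * ∫⁻ x in s, ∫⁻ y, ‖R' x y‖ₑ ^ 2 ∂ν := by
        refine ENNReal.div_le_of_le_mul ((lintegral_enorm_kernel_sub_sq_le hR hR' h).trans_eq ?_)
        ring

end Kernel

section Partition

lemma setLIntegral_Ioo_eq_sum {α : Type*} [LinearOrder α] [TopologicalSpace α]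
    [OrderClosedTopology α] [MeasurableSpace α] [OpensMeasurableSpace α] {μ : Measure α}
    [NullSingletonClass μ] {x : ℕ → α} (hx : Monotone x) (f : α → ℝ≥0∞) (n : ℕ) :
    ∫⁻ t in Ioo (x 0) (x n), f t ∂μ =
      ∑ j ∈ Finset.range n, ∫⁻ t in Ioo (x j) (x (j + 1)), f t ∂μ := by
  have hunion : ⋃ j ∈ Finset.range n, Ioc (x j) (x (j + 1)) = Ioc (x 0) (x n) := by
    simpa using hx.biUnion_Ico_Ioc_map_succ 0 n
  simp only [restrict_Ioo_eq_restrict_Ioc]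
  rw [← hunion]
  exact lintegral_biUnion_finset (hx.pairwise_disjoint_on_Ioc_succ.set_pairwise _)
    (fun _ _ => measurableSet_Ioc) f

lemma exists_lintegral_enorm_starProjection_orthogonal_sq_le {E : Type*} [NormedAddCommGroup E]
    [InnerProductSpace ℂ E] {p q : ℝ} (hpq : p < q) {v : ℝ → E} {φ : ℝ → ℝ≥0∞}
    (h : ∀ p' q', p' < q' → Ioo p' q' ⊆ Ioo p q → ∃ c : E,
      ∫⁻ x in Ioo p' q', ‖v x - c‖ₑ ^ 2 ≤ volume (Ioo p' q') ^ 2 * ∫⁻ x in Ioo p' q', φ x)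
    {n : ℕ} (hn : n ≠ 0) :
    ∃ s : Fin n → E,
      ∫⁻ x in Ioo p q, ‖(Submodule.span ℂ (range s))ᗮ.starProjection (v x)‖ₑ ^ 2 ≤
        ENNReal.ofReal ((q - p) / n) ^ 2 * ∫⁻ x in Ioo p q, φ x := by
  set δ := (q - p) / n with hδ
  have hδ₀ : 0 < δ := div_pos (sub_pos.2 hpq) (by positivity)
  set x : ℕ → ℝ := fun j => p + j * δ with hx
  have hmono : StrictMono x := strictMono_nat_of_lt_succ fun j => by simp [hx, add_mul, hδ₀]
  have hx₀ : x 0 = p := by simp [hx]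
  have hxn : x n = q := by simp only [hx, hδ]; field_simp; ring
  have hcell : ∀ j : Fin n, ∃ c : E, ∫⁻ t in Ioo (x j) (x (j + 1)), ‖v t - c‖ₑ ^ 2 ≤
      ENNReal.ofReal δ ^ 2 * ∫⁻ t in Ioo (x j) (x (j + 1)), φ t := fun j => by
    have hlen : volume (Ioo (x j) (x (j + 1))) = ENNReal.ofReal δ := by
      rw [Real.volume_Ioo]; congr 1; simp only [hx]; push_cast; ring
    rw [← hlen]
    refine h _ _ (hmono j.1.lt_succ_self) (Ioo_subset_Ioo ?_ ?_)
    · exact hx₀ ▸ hmono.monotone j.1.zero_le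
    · exact hxn ▸ hmono.monotone j.2
  choose s hs using hcell
  refine ⟨s, ?_⟩
  rw [← hx₀, ← hxn, setLIntegral_Ioo_eq_sum hmono.monotone, setLIntegral_Ioo_eq_sum hmono.monotone,
    Finset.mul_sum, Finset.sum_range, Finset.sum_range]
  refine Finset.sum_le_sum fun j _ => le_trans (lintegral_mono fun t => ?_) (hs j)
  gcongr
  exact enorm_starProjection_orthogonal_le _ (Submodule.subset_span ⟨j, rfl⟩)

end Partition

section IntegralOperator

lemma exists_isCarlemanOperator_of_kernel {α β : Type*} [MeasurableSpace α] [MeasurableSpace β]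
    {μ : Measure α} {ν : Measure β} {a : α → ℂ} {K : α → β → ℂ} {T : Lp ℂ 2 ν →L[ℂ] Lp ℂ 2 μ}
    (hK : ∀ᵐ x ∂μ, MemLp (K x) 2 ν)
    (hT : ∀ f : Lp ℂ 2 ν, ∀ᵐ x ∂μ, T f x = a x * ∫ y, K x y * f y ∂ν) :
    ∃ v : α → Lp ℂ 2 ν, (∀ᵐ x ∂μ, v x =ᵐ[ν] star (K x)) ∧ IsCarlemanOperator T a v := by
  obtain ⟨v, hv⟩ := skolem.1 (hK.mono fun x hx =>
    (⟨hx.star.toLp _, hx.star.coeFn_toLp⟩ : ∃ w : Lp ℂ 2 ν, w =ᵐ[ν] star (K x)))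
  refine ⟨v, hv, fun f => ?_⟩
  filter_upwards [hv, hT f] with x hvx hTx
  rw [hTx, L2.inner_def]
  congr 1
  refine integral_congr_ae ?_
  filter_upwards [hvx] with y hy
  simp only [hy, Pi.star_apply, RCLike.inner_apply, RCLike.star_def, Complex.conj_conj, mul_comm]

section Energy

variable {α β : Type*} [MeasurableSpace α] [MeasurableSpace β] {μ : Measure α} {ν : Measure β}
  {K K' : α → β → ℂ} {B : ℝ}

lemma lintegral_add_enorm_sq_le
    (hmem : ∀ᵐ y ∂ν, MemLp (K · y) 2 μ ∧ MemLp (K' · y) 2 μ)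
    (hint : Integrable (fun y => (∫ x, ‖K x y‖ ^ 2 ∂μ) + ∫ x, ‖K' x y‖ ^ 2 ∂μ) ν)
    (hB : ∫ y, ((∫ x, ‖K x y‖ ^ 2 ∂μ) + ∫ x, ‖K' x y‖ ^ 2 ∂μ) ∂ν ≤ B) :
    ∫⁻ y, ((∫⁻ x, ‖K x y‖ₑ ^ 2 ∂μ) + ∫⁻ x, ‖K' x y‖ₑ ^ 2 ∂μ) ∂ν ≤ ENNReal.ofReal B := by
  refine le_trans (le_of_eq ?_) (ENNReal.ofReal_le_ofReal hB)
  rw [ofReal_integral_eq_lintegral_ofReal hint (Eventually.of_forall fun _ => by positivity)]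
  refine lintegral_congr_ae ?_
  filter_upwards [hmem] with y hy
  rw [ENNReal.ofReal_add (by positivity) (by positivity), ofReal_integral_norm_sq hy.1,
    ofReal_integral_norm_sq hy.2]

lemma lintegral_lintegral_enorm_sq_le [SFinite μ] [SFinite ν]
    (hK : Measurable (Function.uncurry K)) (hK' : Measurable (Function.uncurry K'))
    (hmem : ∀ᵐ y ∂ν, MemLp (K · y) 2 μ ∧ MemLp (K' · y) 2 μ)
    (hint : Integrable (fun y => (∫ x, ‖K x y‖ ^ 2 ∂μ) + ∫ x, ‖K' x y‖ ^ 2 ∂μ) ν)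
    (hB : ∫ y, ((∫ x, ‖K x y‖ ^ 2 ∂μ) + ∫ x, ‖K' x y‖ ^ 2 ∂μ) ∂ν ≤ B) :
    (∫⁻ x, ∫⁻ y, ‖K x y‖ₑ ^ 2 ∂ν ∂μ ≤ ENNReal.ofReal B) ∧
      ∫⁻ x, ∫⁻ y, ‖K' x y‖ₑ ^ 2 ∂ν ∂μ ≤ ENNReal.ofReal B := by
  have hle := lintegral_add_enorm_sq_le hmem hint hB
  constructor
  · rw [lintegral_lintegral_swap (by fun_prop)]
    exact (lintegral_mono fun _ => le_self_add).trans hle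
  · rw [lintegral_lintegral_swap (by fun_prop)]
    exact (lintegral_mono fun _ => le_add_self).trans hle

lemma ae_memLp_two_of_lintegral_lintegral_ne_top [SFinite ν]
    (hK : Measurable (Function.uncurry K))
    (h : ∫⁻ x, ∫⁻ y, ‖K x y‖ₑ ^ 2 ∂ν ∂μ ≠ ⊤) : ∀ᵐ x ∂μ, MemLp (K x) 2 ν := by
  have hmeas : Measurable fun x => ∫⁻ y, ‖K x y‖ₑ ^ 2 ∂ν :=
    Measurable.lintegral_prod_right' (f := fun z : α × β => ‖K z.1 z.2‖ₑ ^ 2) (by fun_prop)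
  filter_upwards [ae_lt_top hmeas h] with x hx
  exact memLp_two_of_lintegral_enorm_sq_ne_top
    (hK.comp measurable_prodMk_left).aestronglyMeasurable hx.ne

end Energy

variable {β : Type*} [MeasurableSpace β] {ν : Measure β} [SFinite ν] {p q : ℝ}
  {a : ℝ → ℂ} {R R' : ℝ → β → ℂ} {M : ℝ}

lemma IsCarlemanOperator.sVal_two_mul_le {v : ℝ → Lp ℂ 2 ν}
    {T : Lp ℂ 2 ν →L[ℂ] Lp ℂ 2 (volume.restrict (Ioo p q))} (hT : IsCarlemanOperator T a v)
    (hv : ∀ᵐ x ∂volume.restrict (Ioo p q), v x =ᵐ[ν] star (R x)) (hpq : p < q) (hM : 0 ≤ M)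
    (hR : Measurable (Function.uncurry R)) (hR' : Measurable (Function.uncurry R'))
    (ha : eLpNorm a ⊤ (volume.restrict (Ioo p q)) ≠ ⊤)
    (hW : ∀ᵐ y ∂ν, HasWeakDerivOn (R · y) (R' · y) (Ioo p q))
    (hRM' : ∫⁻ x in Ioo p q, ∫⁻ y, ‖R' x y‖ₑ ^ 2 ∂ν ≤ ENNReal.ofReal M ^ 2)
    {n : ℕ} (hn : n ≠ 0) :
    sVal T (2 * n) ≤ (q - p) * (M * (eLpNorm a ⊤ (volume.restrict (Ioo p q))).toReal) *
      (n : ℝ) ^ (-(3 / 2) : ℝ) := by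
  set A := (eLpNorm a ⊤ (volume.restrict (Ioo p q))).toReal
  have hqp : 0 < q - p := sub_pos.2 hpq
  have hn₀ : 0 < (n : ℝ) := by positivity
  obtain ⟨s, hs⟩ := exists_lintegral_enorm_starProjection_orthogonal_sq_le hpq
    (fun p' q' hpq' hsub => exists_lintegral_enorm_sub_sq_le (by simpa using hpq')
      measure_Ioo_lt_top.ne hR hR' (hW.mono fun y hy => hy.mono hsub)
      (ae_restrict_of_ae_restrict_of_subset hsub hv)) hn
  have hbound : ∫⁻ x in Ioo p q, ‖(Submodule.span ℂ (range s))ᗮ.starProjection (v x)‖ₑ ^ 2 ≤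
      ENNReal.ofReal ((q - p) / n * M) ^ 2 := by
    rw [ENNReal.ofReal_mul (by positivity), mul_pow]
    exact hs.trans (by gcongr)
  have hpow : (n : ℝ) ^ (-(3 / 2) : ℝ) = (n * √n)⁻¹ := by
    rw [Real.rpow_neg hn₀.le, Real.sqrt_eq_rpow, ← Real.rpow_one_add' hn₀.le (by norm_num)]
    norm_num
  calc sVal T (2 * n) = sVal T (n + n) := by rw [two_mul]
    _ ≤ (q - p) / n * M * A / √((n : ℝ) + 1) := hT.sVal_add_le ha (by positivity) hbound n
    _ ≤ (q - p) / n * M * A / √n := by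
        gcongr
        linarith
    _ = (q - p) * (M * A) * (n : ℝ) ^ (-(3 / 2) : ℝ) := by
        rw [hpow]
        field_simp

theorem integral_operator_W12_kernel_counting_bound_general (hpq : p < q) (hM : 0 ≤ M)
    (hR : Measurable (Function.uncurry R)) (hR' : Measurable (Function.uncurry R'))
    (ha : eLpNorm a ⊤ (volume.restrict (Ioo p q)) < ⊤)
    (hmem : ∀ᵐ y ∂ν, MemLp (R · y) 2 (volume.restrict (Ioo p q)) ∧
      MemLp (R' · y) 2 (volume.restrict (Ioo p q)))
    (hW : ∀ᵐ y ∂ν, HasWeakDerivOn (R · y) (R' · y) (Ioo p q))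
    (hint : Integrable (fun y =>
      (∫ x in Ioo p q, ‖R x y‖ ^ 2) + ∫ x in Ioo p q, ‖R' x y‖ ^ 2) ν)
    (hRM : ∫ y, ((∫ x in Ioo p q, ‖R x y‖ ^ 2) + ∫ x in Ioo p q, ‖R' x y‖ ^ 2) ∂ν ≤ M ^ 2)
    (T : Lp ℂ 2 ν →L[ℂ] Lp ℂ 2 (volume.restrict (Ioo p q)))
    (hT : ∀ f : Lp ℂ 2 ν, ∀ᵐ x ∂volume.restrict (Ioo p q),
      T f x = a x * ∫ y, R x y * f y ∂ν) :
    IsCompactOperator T ∧ ∀ t : ℝ, 0 < t →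
      (sCount T t : ℝ) ≤ 4 * max 1 (q - p) ^ ((2 : ℝ) / 3) *
        (M * (eLpNorm a ⊤ (volume.restrict (Ioo p q))).toReal) ^ ((2 : ℝ) / 3) *
          t ^ ((2 : ℝ) / 3) := by
  obtain ⟨hRE, hRE'⟩ := lintegral_lintegral_enorm_sq_le hR hR' hmem hint hRM
  rw [ENNReal.ofReal_pow hM] at hRE hRE'
  obtain ⟨v, hv, hTv⟩ := exists_isCarlemanOperator_of_kernel
    (ae_memLp_two_of_lintegral_lintegral_ne_top hR (ne_top_of_le_ne_top (by finiteness) hRE)) hT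
  set A := (eLpNorm a ⊤ (volume.restrict (Ioo p q))).toReal
  set D := max 1 (q - p) * (M * A) with hD
  have hMA : 0 ≤ M * A := by positivity
  have h₀ : sVal T 0 ≤ D := by
    have hvE : ∫⁻ x in Ioo p q, ‖v x‖ₑ ^ 2 ≤ ENNReal.ofReal M ^ 2 :=
      (lintegral_congr_ae (hv.mono fun _ => Lp_enorm_sq_of_ae_eq_star)).trans_le hRE
    calc sVal T 0 ≤ M * A := by
          simpa only [Nat.cast_zero, zero_add, Real.sqrt_one, div_one] using
            hTv.sVal_le ha.ne hM hvE 0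
      _ ≤ D := le_mul_of_one_le_left hMA (le_max_left _ _)
  have hdecay : ∀ n : ℕ, n ≠ 0 → sVal T (2 * n) ≤ D * (n : ℝ) ^ (-(3 / 2) : ℝ) := fun n hn =>
    (hTv.sVal_two_mul_le hv hpq hM hR hR' ha.ne hW hRE' hn).trans
      (by rw [hD]; gcongr; exact le_max_right _ _)
  refine ⟨isCompactOperator_of_sVal_mul_le (by norm_num) hdecay, fun t ht => ?_⟩
  calc (sCount T t : ℝ) ≤ 2 * (2 : ℕ) * (D * t) ^ ((3 / 2 : ℝ)⁻¹) :=
        sCount_le_of_sVal_mul_le (by positivity) (by norm_num) h₀ hdecay ht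
    _ = _ := by
        rw [Real.mul_rpow (by positivity) ht.le, Real.mul_rpow (by positivity) hMA, inv_div]
        push_cast
        ring

end IntegralOperator

/-- Counting-function bound for an integral operator whose kernel lies in
`L²(ℝ_y; W¹₂((0,1)_x))`, with a bounded multiplier `a`.  The weak derivative of the kernel
in `x` is encoded by `R'` together with the Newton–Leibniz representation.  The constant
`C` is universal (independent of the kernel and the multiplier). -/
theorem integral_operator_W12_kernel_counting_bound :
    ∃ C : ℝ, 0 < C ∧
      ∀ (a : ℝ → ℂ) (R R' : ℝ → ℝ → ℂ) (M : ℝ), 0 ≤ M →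
        Measurable (Function.uncurry R) → Measurable (Function.uncurry R') →
        AEStronglyMeasurable a (volume.restrict (Ioo (0:ℝ) 1)) →
        eLpNorm a ⊤ (volume.restrict (Ioo (0:ℝ) 1)) < ⊤ →
        -- for a.e. y, R(·,y) ∈ W¹₂(0,1) with weak derivative R'(·,y)
        (∀ᵐ y : ℝ, MemLp (fun x => R x y) 2 (volume.restrict (Ioo (0:ℝ) 1)) ∧
          MemLp (fun x => R' x y) 2 (volume.restrict (Ioo (0:ℝ) 1)) ∧
          IntegrableOn (fun x => R' x y) (Ioo (0:ℝ) 1) ∧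
          ∃ c : ℂ, ∀ᵐ x ∂(volume.restrict (Ioo (0:ℝ) 1)),
            R x y = c + ∫ u in (1/2:ℝ)..x, R' u y) →
        Integrable (fun y : ℝ =>
          (∫ x in Ioo (0:ℝ) 1, ‖R x y‖^2) + ∫ x in Ioo (0:ℝ) 1, ‖R' x y‖^2) →
        (∫ y : ℝ, ((∫ x in Ioo (0:ℝ) 1, ‖R x y‖^2) + ∫ x in Ioo (0:ℝ) 1, ‖R' x y‖^2))
          = M^2 →
        ∀ Rop : Lp ℂ 2 (volume : Measure ℝ) →L[ℂ] Lp ℂ 2 (volume.restrict (Ioo (0:ℝ) 1)),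
          (∀ f : Lp ℂ 2 (volume : Measure ℝ),
            ∀ᵐ x ∂(volume.restrict (Ioo (0:ℝ) 1)),
              (Rop f : ℝ → ℂ) x = a x * ∫ y : ℝ, R x y * (f : ℝ → ℂ) y) →
          IsCompactOperator (⇑Rop) ∧
          ∀ t : ℝ, 0 < t →
            (sCount Rop t : ℝ) ≤
              C * (M * (eLpNorm a ⊤ (volume.restrict (Ioo (0:ℝ) 1))).toReal) ^ ((2:ℝ)/3)
                * t ^ ((2:ℝ)/3) := by
  refine ⟨4 * max 1 (1 - 0) ^ ((2 : ℝ) / 3), by positivity,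
    fun a R R' M hM hR hR' _ ha hW hint hRM T hT => ?_⟩
  exact integral_operator_W12_kernel_counting_bound_general zero_lt_one hM hR hR' ha
    (hW.mono fun y hy => ⟨hy.1, hy.2.1⟩)
    (hW.mono fun y ⟨_, _, hR'y, _, hy⟩ =>
      .of_ae_eq_const_add_integral (by norm_num) hR'y hy) hint hRM.le T hT
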